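/- arXiv:1803.11038 — 3 statements merged into one kernel-verified Lean document; each statement's English description precedes it below -/
import Mathlib

section
/- There exist two first-order structures S and S' in the language with one ternary relation symbol P, one binary relation symbol C and one unary relation symbol I such that S and S' are elementarily equivalent, both S and S' are completely representable, and the term algebras of S and S' (regarded as structures in the language with binary operations + and ;, unary operations − and ⁻, and a constant 1') are not elementarily equivalent. -/
open FirstOrder FirstOrder.Language

/-- Relation symbols of the language of atom structures: a unary `I`,
a binary `C` and a ternary `P`. -/
inductive AtomRel : ℕ → Type
  | I : AtomRel 1
  | C : AtomRel 2
  | P : AtomRel 3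

/-- The first-order language with one ternary relation symbol `P`, one binary
relation symbol `C` and one unary relation symbol `I`. -/
def atomLang : FirstOrder.Language :=
  ⟨fun _ => Empty, AtomRel⟩

/-- Function symbols of the language of the term algebras: a constant `1'`,
unary symbols `−` (complement) and `⁻` (converse), binary symbols `+` and `;`. -/
inductive AlgFun : ℕ → Type
  | one : AlgFun 0
  | compl : AlgFun 1
  | conv : AlgFun 1
  | add : AlgFun 2
  | comp : AlgFun 2

/-- The first-order language with binary operations `+` and `;`, unary
operations `−` and `⁻`, and a constant `1'`. -/
def algLang : FirstOrder.Language :=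
  ⟨AlgFun, fun _ => Empty⟩

section Generic

variable {M : Type} [atomLang.Structure M]

/-- The interpretation of the unary relation symbol `I`. -/
def mI (a : M) : Prop := Structure.RelMap (L := atomLang) (AtomRel.I : atomLang.Relations 1) ![a]

/-- The interpretation of the binary relation symbol `C`. -/
def mC (a b : M) : Prop := Structure.RelMap (L := atomLang) (AtomRel.C : atomLang.Relations 2) ![a, b]

/-- The interpretation of the ternary relation symbol `P`. -/
def mP (a b c : M) : Prop := Structure.RelMap (L := atomLang) (AtomRel.P : atomLang.Relations 3) ![a, b, c]

/-- `X ; Y = {u : ∃ x ∈ X, y ∈ Y, P(x,y,u)}`. -/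
def sComp (X Y : Set M) : Set M := {u | ∃ x ∈ X, ∃ y ∈ Y, mP x y u}

/-- `X⁻ = {u : ∃ x ∈ X, C(x,u)}`. -/
def sConv (X : Set M) : Set M := {u | ∃ x ∈ X, mC x u}

/-- The set of elements satisfying `I`. -/
def idSet (M : Type) [atomLang.Structure M] : Set M := {a | mI a}

end Generic

/-- Membership in the term algebra: the smallest collection of subsets of `M`
containing all singletons and the set `I`, closed under binary union,
complementation, `;` and `⁻`. -/
inductive InTA (M : Type) [atomLang.Structure M] : Set M → Prop
  | sing (a : M) : InTA M {a}
  | idset : InTA M (idSet M)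
  | union {X Y : Set M} : InTA M X → InTA M Y → InTA M (X ∪ Y)
  | compl {X : Set M} : InTA M X → InTA M Xᶜ
  | comp {X Y : Set M} : InTA M X → InTA M Y → InTA M (sComp X Y)
  | conv {X : Set M} : InTA M X → InTA M (sConv X)

/-- The term algebra of an atom structure, as a type. -/
def TermAlg (M : Type) [atomLang.Structure M] : Type := {X : Set M // InTA M X}

/-- The term algebra as a structure in the language `algLang`:
`+` is union, `−` is complement, `;` and `⁻` are the operations defined from
`P` and `C`, and `1'` is the set `I`. -/
instance termAlgStructure (M : Type) [atomLang.Structure M] :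
    algLang.Structure (TermAlg M) where
  funMap := fun {_} f v =>
    match f with
    | .one => ⟨idSet M, InTA.idset⟩
    | .compl => ⟨(v 0).1ᶜ, InTA.compl (v 0).2⟩
    | .conv => ⟨sConv (v 0).1, InTA.conv (v 0).2⟩
    | .add => ⟨(v 0).1 ∪ (v 1).1, InTA.union (v 0).2 (v 1).2⟩
    | .comp => ⟨sComp (v 0).1 (v 1).1, InTA.comp (v 0).2 (v 1).2⟩
  RelMap := fun {_} r _ => r.elim

/-- `a` goes from `x` to `y` when `P(x,a,a)` and `P(a,y,a)`. -/
def goes {M : Type} [atomLang.Structure M] (a x y : M) : Prop := mP x a a ∧ mP a y a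

/-- `X` splits the pair `(x,y)` when some `a ∈ X` and some `b ∉ X` both go
from `x` to `y`. -/
def SplitsG {M : Type} [atomLang.Structure M] (X : Set M) (x y : M) : Prop :=
  ∃ a ∈ X, ∃ b ∉ X, goes a x y ∧ goes b x y

/-- The pair `(x,y)` is splitable when `x ≠ y` and at least two distinct
elements go from `x` to `y`. -/
def SplitableG {M : Type} [atomLang.Structure M] (x y : M) : Prop :=
  x ≠ y ∧ ∃ a b : M, a ≠ b ∧ goes a x y ∧ goes b x y

/-- Converse of a binary relation, as a set of pairs. -/
def relConv {U : Type} (R : Set (U × U)) : Set (U × U) := {p | (p.2, p.1) ∈ R}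

/-- Composition of binary relations, as sets of pairs. -/
def relComp {U : Type} (R T : Set (U × U)) : Set (U × U) :=
  {p | ∃ w, (p.1, w) ∈ R ∧ (w, p.2) ∈ T}

/-- An atom structure is completely representable. -/
def CompRep (M : Type) [atomLang.Structure M] : Prop :=
  ∃ (U : Type) (rep : M → Set (U × U)),
    (∀ a : M, (rep a).Nonempty) ∧
    (∀ a b : M, a ≠ b → Disjoint (rep a) (rep b)) ∧
    (⋃ a : M, rep a) = Set.univ ∧
    (∀ a : M, (mI a ↔ rep a ⊆ Set.diagonal U) ∧
      ((rep a ⊆ Set.diagonal U) ↔ (rep a ∩ Set.diagonal U).Nonempty)) ∧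
    (∀ a b : M, (mC a b ↔ rep b = relConv (rep a)) ∧
      ((rep b = relConv (rep a)) ↔ (rep b ∩ relConv (rep a)).Nonempty)) ∧
    (∀ a b c : M, (mP a b c ↔ rep c ⊆ relComp (rep a) (rep b)) ∧
      ((rep c ⊆ relComp (rep a) (rep b)) ↔ (rep c ∩ relComp (rep a) (rep b)).Nonempty))

/-- Coordinates on an atom structure: source, target and a sign. -/
structure IsModel (M V : Type) [atomLang.Structure M] (r : V → V → Prop)
    (s t : M → V) (g : M → Bool) : Prop where
  rrefl : ∀ x, r x x
  rsymm : ∀ x y, r x y → r y x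
  rtrans : ∀ x y z, r x y → r y z → r x z
  inj : ∀ a b, s a = s b → t a = t b → g a = g b → a = b
  ex : ∀ x y i, r x y → ∃ a, s a = x ∧ t a = y ∧ g a = i
  ex0 : ∀ x y, ∃ a, s a = x ∧ t a = y
  g0 : ∀ a, ¬ r (s a) (t a) → g a = false
  hI : ∀ a, mI a ↔ s a = t a ∧ g a = false
  hC : ∀ a b, mC a b ↔ s b = t a ∧ t b = s a ∧ g b = g a
  hP : ∀ a b c, mP a b c ↔ t a = s b ∧ s c = s a ∧ t c = t b ∧
    (r (s a) (t a) → r (s b) (t b) → g c = xor (g a) (g b))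

namespace IsModel

variable {M V : Type} [atomLang.Structure M] {r : V → V → Prop}
    {s t : M → V} {g : M → Bool}

theorem compRep (h : IsModel M V r s t g) : CompRep M := by
  classical
  let rep : M → Set ((V × Bool) × (V × Bool)) := fun a =>
    {p | p.1.1 = s a ∧ p.2.1 = t a ∧ (r (s a) (t a) → g a = xor p.1.2 p.2.2)}
  have mem : ∀ a x i y j, (((x, i), (y, j)) : (V × Bool) × (V × Bool)) ∈ rep a ↔
      x = s a ∧ y = t a ∧ (r (s a) (t a) → g a = xor i j) := fun _ _ _ _ _ => Iff.rfl
  have ne : ∀ a, (rep a).Nonempty := fun a =>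
    ⟨((s a, false), (t a, g a)), by rw [mem]; simp⟩
  have uniq : ∀ a b p, p ∈ rep a → p ∈ rep b → a = b := by
    rintro a b ⟨⟨x, i⟩, ⟨y, j⟩⟩ h1 h2
    rw [mem] at h1 h2
    obtain ⟨rfl, rfl, h1⟩ := h1
    obtain ⟨e1, e2, h2⟩ := h2
    refine h.inj _ _ e1 e2 ?_
    by_cases hr : r (s a) (t a)
    · rw [h1 hr, h2 (e1 ▸ e2 ▸ hr)]
    · rw [h.g0 a hr, h.g0 b (e1 ▸ e2 ▸ hr)]
  refine ⟨V × Bool, rep, ne, ?_, ?_, ?_, ?_, ?_⟩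
  · intro a b hab
    rw [Set.disjoint_left]
    exact fun p h1 h2 => hab (uniq a b p h1 h2)
  · rw [Set.eq_univ_iff_forall]
    rintro ⟨⟨x, i⟩, ⟨y, j⟩⟩
    rw [Set.mem_iUnion]
    by_cases hr : r x y
    · obtain ⟨a, rfl, rfl, e⟩ := h.ex x y (xor i j) hr
      exact ⟨a, by rw [mem]; simp [e]⟩
    · obtain ⟨a, rfl, rfl⟩ := h.ex0 x y
      exact ⟨a, by rw [mem]; simp [hr]⟩
  · intro a
    have k1 : mI a → rep a ⊆ Set.diagonal (V × Bool) := by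
      rw [h.hI]
      rintro ⟨e1, e2⟩ ⟨⟨x, i⟩, ⟨y, j⟩⟩ hp
      rw [mem] at hp
      obtain ⟨rfl, rfl, hp⟩ := hp
      have := hp (e1 ▸ h.rrefl _)
      rw [e2] at this
      simp only [Set.mem_diagonal_iff, Prod.mk.injEq]
      refine ⟨e1, ?_⟩
      revert this; cases i <;> cases j <;> simp
    have k2 : rep a ⊆ Set.diagonal (V × Bool) → (rep a ∩ Set.diagonal (V × Bool)).Nonempty := by
      intro hs
      obtain ⟨p, hp⟩ := ne a
      exact ⟨p, hp, hs hp⟩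
    have k3 : (rep a ∩ Set.diagonal (V × Bool)).Nonempty → mI a := by
      rintro ⟨⟨⟨x, i⟩, ⟨y, j⟩⟩, hp, hd⟩
      rw [mem] at hp
      simp only [Set.mem_diagonal_iff, Prod.mk.injEq] at hd
      obtain ⟨rfl, rfl⟩ := hd
      obtain ⟨e1, e2, hp⟩ := hp
      rw [h.hI]
      refine ⟨e1 ▸ e2, ?_⟩
      have := hp (by rw [← e1, ← e2]; exact h.rrefl _)
      simpa using this
    tauto
  · intro a b
    have k1 : mC a b → rep b = relConv (rep a) := by
      rw [h.hC]
      rintro ⟨e1, e2, e3⟩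
      ext ⟨⟨x, i⟩, ⟨y, j⟩⟩
      change _ ↔ ((y, j), (x, i)) ∈ rep a
      rw [mem, mem, e1, e2, e3, Bool.xor_comm]
      have : r (s a) (t a) ↔ r (t a) (s a) := ⟨h.rsymm _ _, h.rsymm _ _⟩
      tauto
    have k2 : rep b = relConv (rep a) → (rep b ∩ relConv (rep a)).Nonempty := by
      intro hs
      rw [← hs, Set.inter_self]
      exact ne b
    have k3 : (rep b ∩ relConv (rep a)).Nonempty → mC a b := by
      rintro ⟨⟨⟨x, i⟩, ⟨y, j⟩⟩, hp, hd⟩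
      change ((y, j), (x, i)) ∈ rep a at hd
      rw [mem] at hp hd
      obtain ⟨e1, e2, hp⟩ := hp
      obtain ⟨e3, e4, hd⟩ := hd
      rw [h.hC]
      refine ⟨by rw [← e1, e4], by rw [← e2, e3], ?_⟩
      by_cases hr : r (s a) (t a)
      · rw [hd hr, hp (by rw [← e1, ← e2, e3, e4]; exact h.rsymm _ _ hr), Bool.xor_comm]
      · rw [h.g0 a hr, h.g0 b (by rw [← e1, ← e2, e3, e4]; exact fun k => hr (h.rsymm _ _ k))]
    tauto
  · intro a b c
    have k1 : mP a b c → rep c ⊆ relComp (rep a) (rep b) := by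
      rw [h.hP]
      rintro ⟨e1, e2, e3, e4⟩ ⟨⟨x, i⟩, ⟨z, k⟩⟩ hp
      rw [mem] at hp
      obtain ⟨rfl, rfl, hp⟩ := hp
      by_cases hr : r (s a) (t a)
      · refine ⟨(t a, xor i (g a)), ?_, ?_⟩
        · rw [mem]; simp [e2]
        · rw [mem]
          refine ⟨e1, e3, fun hr2 => ?_⟩
          have := hp (by rw [e2, e3]; exact h.rtrans _ _ _ hr (e1 ▸ hr2))
          rw [e4 hr hr2] at this
          revert this
          cases i <;> cases k <;> cases g a <;> cases g b <;> simp
      · refine ⟨(t a, xor k (g b)), ?_, ?_⟩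
        · rw [mem]; simp [e2, hr]
        · rw [mem]
          refine ⟨e1, e3, fun hr2 => ?_⟩
          cases k <;> cases g b <;> simp
    have k2 : rep c ⊆ relComp (rep a) (rep b) → (rep c ∩ relComp (rep a) (rep b)).Nonempty := by
      intro hs
      obtain ⟨p, hp⟩ := ne c
      exact ⟨p, hp, hs hp⟩
    have k3 : (rep c ∩ relComp (rep a) (rep b)).Nonempty → mP a b c := by
      rintro ⟨⟨⟨x, i⟩, ⟨z, k⟩⟩, hp, ⟨⟨y, j⟩, h1, h2⟩⟩
      rw [mem] at hp
      change ((x, i), (y, j)) ∈ rep a at h1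
      change ((y, j), (z, k)) ∈ rep b at h2
      rw [mem] at h1 h2
      obtain ⟨e1, e2, hp⟩ := hp
      obtain ⟨e3, e4, h1⟩ := h1
      obtain ⟨e5, e6, h2⟩ := h2
      rw [h.hP]
      refine ⟨by rw [← e4, e5], by rw [← e1, e3], by rw [← e2, e6], fun r1 r2 => ?_⟩
      rw [h1 r1, h2 r2, hp]
      · cases i <;> cases j <;> cases k <;> simp
      · rw [← e1, ← e2, e3, e6]
        exact h.rtrans _ _ _ r1 (by rw [← e4, e5]; exact r2)
    tauto

/-- The set of atoms sharing the source of `a` and the target of `b`. -/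
theorem row (h : IsModel M V r s t g) (a b : M) :
    sComp (sComp {a} Set.univ) {b} = {u | s u = s a ∧ t u = t b} := by
  classical
  have key : ∀ a u : M, s u = s a → ∃ y, mP a y u := by
    intro a u e
    by_cases hr : r (t a) (t u)
    · obtain ⟨y, e1, e2, e3⟩ := h.ex (t a) (t u) (xor (g a) (g u)) hr
      refine ⟨y, (h.hP _ _ _).2 ⟨e1.symm, e, e2.symm, fun _ _ => ?_⟩⟩
      rw [e3]; simp
    · obtain ⟨y, e1, e2⟩ := h.ex0 (t a) (t u)
      exact ⟨y, (h.hP _ _ _).2 ⟨e1.symm, e, e2.symm, fun _ k => absurd (e1 ▸ e2 ▸ k) hr⟩⟩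
  have key2 : ∀ b u : M, t u = t b → ∃ y, s y = s u ∧ mP y b u := by
    intro b u e
    by_cases hr : r (s u) (s b)
    · obtain ⟨y, e1, e2, e3⟩ := h.ex (s u) (s b) (xor (g u) (g b)) hr
      refine ⟨y, e1, (h.hP _ _ _).2 ⟨e2, e1.symm, e, fun _ _ => ?_⟩⟩
      rw [e3]; simp
    · obtain ⟨y, e1, e2⟩ := h.ex0 (s u) (s b)
      exact ⟨y, e1, (h.hP _ _ _).2 ⟨e2, e1.symm, e, fun k _ => absurd (e1 ▸ e2 ▸ k) hr⟩⟩
  ext u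
  constructor
  · rintro ⟨v, ⟨a', rfl, y, -, h1⟩, b', rfl, h2⟩
    rw [h.hP] at h1 h2
    exact ⟨h2.2.1.trans h1.2.1, h2.2.2.1⟩
  · rintro ⟨e1, e2⟩
    obtain ⟨v, e3, h2⟩ := key2 b u e2
    obtain ⟨y, h1⟩ := key a v (e3.trans e1)
    exact ⟨v, ⟨a, rfl, y, trivial, h1⟩, b, rfl, h2⟩

end IsModel

/-- Splitting property of the term algebra, at the level of atoms. -/
def QProp (M : Type) [atomLang.Structure M] : Prop :=
  ∀ a : M, ∃ X, InTA M X ∧ ∀ b : M,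
    (sComp (sComp {a} Set.univ) {b} ⊆ X ∨ sComp (sComp {a} Set.univ) {b} ⊆ Xᶜ) →
      ∃ c, sComp (sComp {a} Set.univ) {b} = {c}

namespace IsModel

variable {M V : Type} [atomLang.Structure M] {r : V → V → Prop}
    {s t : M → V} {g : M → Bool}

theorem inTA_empty (a : M) : InTA M ∅ := by
  have := InTA.compl ((InTA.sing a).union (InTA.sing a).compl)
  simpa using this

theorem inTA_finite (a : M) {X : Set M} (hX : X.Finite) : InTA M X := by
  induction X, hX using Set.Finite.induction_on with
  | empty => exact inTA_empty a
  | @insert b Y _ _ ih =>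
    rw [Set.insert_eq]
    exact (InTA.sing b).union ih

theorem q_of_finite (h : IsModel M V r s t g) (hf : ∀ x, {y | r x y}.Finite) : QProp M := by
  intro a
  refine ⟨{c | s c = s a ∧ r (s a) (t c) ∧ g c = true}, ?_, ?_⟩
  · apply inTA_finite a
    apply Set.Finite.of_finite_image (f := t) ((hf (s a)).subset _)
    · rintro b ⟨b1, b2, b3⟩ c ⟨c1, c2, c3⟩ e
      exact h.inj _ _ (b1.trans c1.symm) e (b3.trans c3.symm)
    · rintro _ ⟨c, hc, rfl⟩
      exact hc.2.1
  · intro b hb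
    rw [h.row] at hb ⊢
    have hr : ¬ r (s a) (t b) := by
      intro hr
      obtain ⟨c, c1, c2, c3⟩ := h.ex _ _ true hr
      obtain ⟨d, d1, d2, d3⟩ := h.ex _ _ false hr
      rcases hb with hb | hb
      · have := (hb (show d ∈ _ from ⟨d1, d2⟩)).2.2
        simp [d3] at this
      · exact hb (show c ∈ _ from ⟨c1, c2⟩) ⟨c1, c2 ▸ hr, c3⟩
    obtain ⟨c, c1, c2⟩ := h.ex0 (s a) (t b)
    refine ⟨c, ?_⟩
    ext u
    simp only [Set.mem_ofPred_eq, Set.mem_singleton_iff]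
    constructor
    · rintro ⟨u1, u2⟩
      refine h.inj _ _ (u1.trans c1.symm) (u2.trans c2.symm) ?_
      rw [h.g0 u (by rwa [u1, u2]), h.g0 c (by rwa [c1, c2])]
    · rintro rfl
      exact ⟨c1, c2⟩

open Classical in
theorem exists_flip (h : IsModel M V r s t g) (y : V) : ∃ f : M → M, ∀ a,
    s (f a) = s a ∧ t (f a) = t a ∧
      (r (s a) (t a) → g (f a) = xor (g a) (xor (decide (s a = y)) (decide (t a = y)))) := by
  apply Classical.axiomOfChoice (r := fun a b => s b = s a ∧ t b = t a ∧
      (r (s a) (t a) → g b = xor (g a) (xor (decide (s a = y)) (decide (t a = y)))))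
  intro a
  by_cases hr : r (s a) (t a)
  · obtain ⟨b, b1, b2, b3⟩ := h.ex (s a) (t a)
      (xor (g a) (xor (decide (s a = y)) (decide (t a = y)))) hr
    exact ⟨b, b1, b2, fun _ => b3⟩
  · exact ⟨a, rfl, rfl, fun k => absurd k hr⟩

open Classical in
theorem not_q_of_infinite (h : IsModel M V r s t g) (x : V) (hf : {y | r x y}.Infinite) :
    ¬ QProp M := by
  intro hq
  choose f fs ft fg using h.exists_flip
  have ff : ∀ y a, f y (f y a) = a := by
    intro y a
    refine h.inj _ _ (by rw [fs, fs]) (by rw [ft, ft]) ?_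
    by_cases hr : r (s a) (t a)
    · rw [fg y (f y a) (by rwa [fs, ft]), fg y a hr, fs, ft]
      cases g a <;> cases decide (s a = y) <;> cases decide (t a = y) <;> rfl
    · rw [h.g0 a hr, h.g0 _ (by rwa [fs, ft, fs, ft])]
  have fI : ∀ y a, mI a → mI (f y a) := by
    intro y a
    rw [h.hI, h.hI]
    rintro ⟨e1, e2⟩
    refine ⟨by rw [fs, ft, e1], ?_⟩
    rw [fg y a (e1 ▸ h.rrefl _), e2, e1]
    simp
  have fC : ∀ y a b, mC a b → mC (f y a) (f y b) := by
    intro y a b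
    rw [h.hC, h.hC]
    rintro ⟨e1, e2, e3⟩
    refine ⟨by rw [fs, ft, e1], by rw [fs, ft, e2], ?_⟩
    by_cases hr : r (s a) (t a)
    · rw [fg y a hr, fg y b (by rw [e1, e2]; exact h.rsymm _ _ hr), e1, e2, e3,
        Bool.xor_comm (decide (s a = y))]
    · rw [h.g0 (f y a) (by rwa [fs, ft]), h.g0 (f y b)
        (by rw [fs, ft, e1, e2]; exact fun k => hr (h.rsymm _ _ k))]
  have fP : ∀ y a b c, mP a b c → mP (f y a) (f y b) (f y c) := by
    intro y a b c
    rw [h.hP, h.hP]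
    rintro ⟨e1, e2, e3, e4⟩
    refine ⟨by rw [fs, ft, e1], by rw [fs, fs, e2], by rw [ft, ft, e3], ?_⟩
    rw [fs, ft, fs, ft]
    intro r1 r2
    rw [fg y a r1, fg y b r2, fg y c (by rw [e2, e3]; exact h.rtrans _ _ _ r1 (e1 ▸ r2)),
      e4 r1 r2, e1, e2, e3]
    cases g a <;> cases g b <;> cases decide (s a = y) <;> cases decide (t b = y) <;>
      cases decide (s b = y) <;> rfl
  have inv : ∀ X, InTA M X → ∃ F : Set V, F.Finite ∧ ∀ y, y ∉ F → ∀ a, a ∈ X → f y a ∈ X := by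
    intro X hX
    induction hX with
    | sing a =>
      refine ⟨{s a, t a}, by simp, ?_⟩
      rintro y hy b rfl
      simp only [Set.mem_insert_iff, Set.mem_singleton_iff, not_or] at hy
      refine h.inj _ _ (fs _ _) (ft _ _) ?_
      by_cases hr : r (s b) (t b)
      · rw [fg y b hr]; simp [Ne.symm hy.1, Ne.symm hy.2]
      · rw [h.g0 b hr, h.g0 (f y b) (by rwa [fs, ft])]
    | idset => exact ⟨∅, by simp, fun y _ a ha => fI y a ha⟩
    | union _ _ ih1 ih2 =>
      obtain ⟨F, hF, h1⟩ := ih1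
      obtain ⟨G, hG, h2⟩ := ih2
      refine ⟨F ∪ G, hF.union hG, fun y hy a ha => ?_⟩
      simp only [Set.mem_union, not_or] at hy
      exact ha.imp (h1 y hy.1 a) (h2 y hy.2 a)
    | compl _ ih1 =>
      obtain ⟨F, hF, h1⟩ := ih1
      refine ⟨F, hF, fun y hy a ha k => ha ?_⟩
      have := h1 y hy _ k
      rwa [ff] at this
    | comp _ _ ih1 ih2 =>
      obtain ⟨F, hF, h1⟩ := ih1
      obtain ⟨G, hG, h2⟩ := ih2
      refine ⟨F ∪ G, hF.union hG, ?_⟩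
      rintro y hy u ⟨a, ha, b, hb, hp⟩
      simp only [Set.mem_union, not_or] at hy
      exact ⟨_, h1 y hy.1 a ha, _, h2 y hy.2 b hb, fP y _ _ _ hp⟩
    | conv _ ih1 =>
      obtain ⟨F, hF, h1⟩ := ih1
      refine ⟨F, hF, ?_⟩
      rintro y hy u ⟨a, ha, hp⟩
      exact ⟨_, h1 y hy a ha, fC y _ _ hp⟩
  obtain ⟨a, a1, a2⟩ := h.ex0 x x
  obtain ⟨X, hX, hq⟩ := hq a
  obtain ⟨F, hF, hinv⟩ := inv X hX
  obtain ⟨y, hy, hyF⟩ := hf.exists_notMem_finite (hF.insert x)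
  simp only [Set.mem_insert_iff, not_or] at hyF
  obtain ⟨c, c1, c2, c3⟩ := h.ex x y true hy
  obtain ⟨d, d1, d2, d3⟩ := h.ex x y false hy
  have hcd : f y c = d := by
    refine h.inj _ _ (by rw [fs, c1, d1]) (by rw [ft, c2, d2]) ?_
    rw [fg y c (by rwa [c1, c2]), c3, d3, c1, c2]
    simp [Ne.symm hyF.1]
  have hdc : f y d = c := by rw [← hcd, ff]
  have hrow : ∀ u, s u = x ∧ t u = y → u = c ∨ u = d := by
    rintro u ⟨u1, u2⟩
    cases e : g u
    · exact Or.inr (h.inj _ _ (u1.trans d1.symm) (u2.trans d2.symm) (e.trans d3.symm))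
    · exact Or.inl (h.inj _ _ (u1.trans c1.symm) (u2.trans c2.symm) (e.trans c3.symm))
  obtain ⟨e, he⟩ := hq c (by
    rw [h.row, a1, c2]
    by_cases hc : c ∈ X
    · left
      intro u hu
      rcases hrow u hu with rfl | rfl
      · exact hc
      · exact hcd ▸ hinv y hyF.2 _ hc
    · right
      intro u hu hu2
      rcases hrow u hu with rfl | rfl
      · exact hc hu2
      · exact hc (hdc ▸ hinv y hyF.2 _ hu2))
  rw [h.row, a1, c2] at he
  have e1 : c = e := he.subset ⟨c1, c2⟩
  have e2 : d = e := he.subset ⟨d1, d2⟩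
  rw [← e2] at e1
  rw [e1, d3] at c3
  exact absurd c3 (by simp)

end IsModel

section Sentence

/-- join term -/
def tAdd {α : Type} (a b : algLang.Term α) : algLang.Term α :=
  Term.func (AlgFun.add : algLang.Functions 2) ![a, b]
/-- composition term -/
def tComp {α : Type} (a b : algLang.Term α) : algLang.Term α :=
  Term.func (AlgFun.comp : algLang.Functions 2) ![a, b]
/-- complement term -/
def tCompl {α : Type} (a : algLang.Term α) : algLang.Term α :=
  Term.func (AlgFun.compl : algLang.Functions 1) ![a]
/-- identity term -/
def tOne {α : Type} : algLang.Term α :=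
  Term.func (AlgFun.one : algLang.Functions 0) ![]
/-- top term -/
def tTop {α : Type} : algLang.Term α := tAdd tOne (tCompl tOne)
/-- variable term -/
def tV {n : ℕ} (i : Fin n) : algLang.Term (Empty ⊕ Fin n) := Term.var (Sum.inr i)

/-- being an atom -/
def fAt {n : ℕ} (i : Fin n) : algLang.BoundedFormula Empty n :=
  ∼(Term.bdEqual (tV i) (tCompl tTop)) ⊓
    ∀' (Term.bdEqual (tAdd (tV (Fin.last n)) (tV i.castSucc)) (tV i.castSucc) ⟹
      (Term.bdEqual (tV (Fin.last n)) (tCompl tTop) ⊔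
        Term.bdEqual (tV (Fin.last n)) (tV i.castSucc)))

/-- the row term -/
def tRow {n : ℕ} (i j : Fin n) : algLang.Term (Empty ⊕ Fin n) :=
  tComp (tComp (tV i) tTop) (tV j)

/-- the distinguishing sentence -/
def fQ : algLang.Sentence :=
  ∀' (fAt (n := 1) 0 ⟹ ∃' ∀' (fAt (n := 3) 2 ⟹
    ((Term.bdEqual (tAdd (tRow (n := 3) 0 2) (tV 1)) (tV 1) ⊔
      Term.bdEqual (tAdd (tRow (n := 3) 0 2) (tCompl (tV 1))) (tCompl (tV 1))) ⟹
      ∃' (fAt (n := 4) 3 ⊓ Term.bdEqual (tV (n := 4) 3) (tRow 0 2)))))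

variable {M : Type} [atomLang.Structure M]

theorem r_add {α : Type} (a b : algLang.Term α) (v : α → TermAlg M) :
    ((tAdd a b).realize v).1 = (a.realize v).1 ∪ (b.realize v).1 := rfl
theorem r_comp {α : Type} (a b : algLang.Term α) (v : α → TermAlg M) :
    ((tComp a b).realize v).1 = sComp (a.realize v).1 (b.realize v).1 := rfl
theorem r_compl {α : Type} (a : algLang.Term α) (v : α → TermAlg M) :
    ((tCompl a).realize v).1 = (a.realize v).1ᶜ := rfl
theorem r_top {α : Type} (v : α → TermAlg M) :
    ((tTop : algLang.Term α).realize v).1 = Set.univ := by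
  rw [tTop, r_add, r_compl, Set.union_compl_self]
theorem r_var {n : ℕ} (i : Fin n) (v : Empty → TermAlg M) (xs : Fin n → TermAlg M) :
    (tV i).realize (Sum.elim v xs) = xs i := rfl
theorem r_row {n : ℕ} (i j : Fin n) (v : Empty → TermAlg M) (xs : Fin n → TermAlg M) :
    ((tRow i j).realize (Sum.elim v xs)).1 = sComp (sComp (xs i).1 Set.univ) (xs j).1 := by
  rw [tRow, r_comp, r_comp, r_top, r_var, r_var]

theorem r_eq {n : ℕ} (a b : algLang.Term (Empty ⊕ Fin n)) (v : Empty → TermAlg M)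
    (xs : Fin n → TermAlg M) : (Term.bdEqual a b).Realize v xs ↔
      (a.realize (Sum.elim v xs)).1 = (b.realize (Sum.elim v xs)).1 := by
  rw [BoundedFormula.realize_bdEqual]
  exact Subtype.ext_iff

theorem r_at {n : ℕ} (i : Fin n) (v : Empty → TermAlg M) (xs : Fin n → TermAlg M) :
    (fAt i).Realize v xs ↔ ∃ a, (xs i).1 = {a} := by
  simp only [fAt, BoundedFormula.realize_inf, BoundedFormula.realize_not,
    BoundedFormula.realize_all, BoundedFormula.realize_imp, BoundedFormula.realize_sup, r_eq,
    r_add, r_compl, r_top, r_var, Fin.snoc_last, Fin.snoc_castSucc, Set.compl_univ]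
  constructor
  · rintro ⟨h1, h2⟩
    obtain ⟨a, ha⟩ := Set.nonempty_iff_ne_empty.2 h1
    refine ⟨a, ?_⟩
    rcases h2 ⟨{a}, InTA.sing a⟩ (by simpa using ha) with h | h
    · exact absurd h (Set.singleton_ne_empty a)
    · exact h.symm
  · rintro ⟨a, ha⟩
    rw [ha]
    refine ⟨Set.singleton_ne_empty a, fun z hz => ?_⟩
    exact Set.subset_singleton_iff_eq.1 (Set.union_eq_right.1 hz)

theorem r_Q : TermAlg M ⊨ fQ ↔ QProp M := by
  unfold fQ Sentence.Realize Formula.Realize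
  simp only [BoundedFormula.realize_inf,
    BoundedFormula.realize_all, BoundedFormula.realize_imp, BoundedFormula.realize_sup,
    BoundedFormula.realize_ex, r_eq, r_at,
    r_add, r_compl, r_row, r_var]
  have e1 : ∀ (x : TermAlg M), (Fin.snoc default x : Fin 1 → TermAlg M) 0 = x := fun _ => rfl
  have e2 : ∀ (x y z : TermAlg M),
    (Fin.snoc (Fin.snoc (Fin.snoc default x) y) z : Fin 3 → TermAlg M) 0 = x := fun _ _ _ => rfl
  have e3 : ∀ (x y z : TermAlg M),
    (Fin.snoc (Fin.snoc (Fin.snoc default x) y) z : Fin 3 → TermAlg M) 1 = y := fun _ _ _ => rfl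
  have e4 : ∀ (x y z : TermAlg M),
    (Fin.snoc (Fin.snoc (Fin.snoc default x) y) z : Fin 3 → TermAlg M) 2 = z := fun _ _ _ => rfl
  have e5 : ∀ (x y z w : TermAlg M), (Fin.snoc (Fin.snoc (Fin.snoc (Fin.snoc default x) y) z) w
      : Fin 4 → TermAlg M) 0 = x := fun _ _ _ _ => rfl
  have e6 : ∀ (x y z w : TermAlg M), (Fin.snoc (Fin.snoc (Fin.snoc (Fin.snoc default x) y) z) w
      : Fin 4 → TermAlg M) 2 = z := fun _ _ _ _ => rfl
  have e7 : ∀ (x y z w : TermAlg M), (Fin.snoc (Fin.snoc (Fin.snoc (Fin.snoc default x) y) z) w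
      : Fin 4 → TermAlg M) 3 = w := fun _ _ _ _ => rfl
  simp only [e1, e2, e3, e4, e5, e6, e7, Set.union_eq_right]
  constructor
  · intro H a
    obtain ⟨X, hX⟩ := H ⟨{a}, InTA.sing a⟩ ⟨a, rfl⟩
    refine ⟨X.1, X.2, fun b hb => ?_⟩
    obtain ⟨w, ⟨c, hc⟩, hw⟩ := hX ⟨{b}, InTA.sing b⟩ ⟨b, rfl⟩ hb
    exact ⟨c, by rw [← hc, hw]⟩
  · rintro H ⟨_, _⟩ ⟨a, rfl⟩
    obtain ⟨X, hX, h2⟩ := H a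
    refine ⟨⟨X, hX⟩, ?_⟩
    rintro ⟨_, _⟩ ⟨b, rfl⟩ hb
    obtain ⟨c, hc⟩ := h2 b hb
    exact ⟨⟨{c}, InTA.sing c⟩, ⟨c, rfl⟩, hc.symm⟩

end Sentence

section Ultra

variable {M V : Type} {r : V → V → Prop}
    {s t : M → V} {g : M → Bool}

/-- The ultrapower. -/
abbrev UP (M : Type) : Type := ((Filter.hyperfilter ℕ : Ultrafilter ℕ) : Filter ℕ).Product (fun _ => M)

/-- Germs. -/
abbrev UG (V : Type) : Type := Filter.Germ ((Filter.hyperfilter ℕ : Ultrafilter ℕ) : Filter ℕ) V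

/-- class of a sequence -/
noncomputable def upMk (f : ℕ → M) : UP M := Quotient.mk _ f

/-- lifted function -/
noncomputable def upMap (s : M → V) : UP M → UG V :=
  Quotient.lift (fun f : ℕ → M => ((fun n => s (f n) : ℕ → V) : UG V)) (by
    intro f f' hf
    refine Filter.Germ.coe_eq.2 ?_
    have hf : ∀ᶠ n in ((Filter.hyperfilter ℕ : Ultrafilter ℕ) : Filter ℕ), f n = f' n := hf
    exact hf.mono fun n hn => congrArg s hn)

theorem upMap_mk (s : M → V) (f : ℕ → M) :
    upMap s (upMk f) = ((fun n => s (f n) : ℕ → V) : UG V) := rfl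

theorem up_ind {p : UP M → Prop} (h : ∀ f : ℕ → M, p (upMk f)) (a : UP M) : p a :=
  Quotient.inductionOn a h

open Classical in
/-- lifted sign -/
noncomputable def upG (g : M → Bool) (a : UP M) : Bool :=
  decide (upMap g a = ((fun _ => true : ℕ → Bool) : UG Bool))

theorem upG_spec (g : M → Bool) (f : ℕ → M) :
    ∀ᶠ n in ((Filter.hyperfilter ℕ : Ultrafilter ℕ) : Filter ℕ), g (f n) = upG g (upMk f) := by
  by_cases h : upMap g (upMk f) = ((fun _ => true : ℕ → Bool) : UG Bool)
  · have e : upG g (upMk f) = true := decide_eq_true h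
    rw [upMap_mk, Filter.Germ.coe_eq] at h
    rw [e]
    exact h
  · have e : upG g (upMk f) = false := decide_eq_false h
    rw [upMap_mk, Filter.Germ.coe_eq] at h
    have h : ¬ ∀ᶠ n in ((Filter.hyperfilter ℕ : Ultrafilter ℕ) : Filter ℕ), g (f n) = true := h
    rw [← Ultrafilter.eventually_not] at h
    rw [e]
    exact h.mono fun n hn => by simpa using hn

variable [iM : atomLang.Structure M]

theorem up_I (f : ℕ → M) : mI (upMk f) ↔
    ∀ᶠ n in ((Filter.hyperfilter ℕ : Ultrafilter ℕ) : Filter ℕ), mI (f n) := by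
  have := @relMap_quotient_mk' atomLang _ _
    (Ultraproduct.setoidPrestructure (fun _ : ℕ => M) (Filter.hyperfilter ℕ)) _
      (AtomRel.I : atomLang.Relations 1) ![f]
  have e : (![upMk f] : Fin 1 → UP M) = fun i => upMk ((![f] : Fin 1 → ℕ → M) i) := by
    funext i; fin_cases i; rfl
  unfold mI
  rw [e]
  refine this.trans (Filter.eventually_congr (.of_forall fun n => ?_))
  have e2 : (![f n] : Fin 1 → M) = fun i => (![f] : Fin 1 → ℕ → M) i n := by
    funext i; fin_cases i; rfl
  rw [e2]

theorem up_C (f f' : ℕ → M) : mC (upMk f) (upMk f') ↔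
    ∀ᶠ n in ((Filter.hyperfilter ℕ : Ultrafilter ℕ) : Filter ℕ), mC (f n) (f' n) := by
  have := @relMap_quotient_mk' atomLang _ _
    (Ultraproduct.setoidPrestructure (fun _ : ℕ => M) (Filter.hyperfilter ℕ)) _
      (AtomRel.C : atomLang.Relations 2) ![f, f']
  have e : (![upMk f, upMk f'] : Fin 2 → UP M) =
      fun i => upMk ((![f, f'] : Fin 2 → ℕ → M) i) := by
    funext i; fin_cases i <;> rfl
  unfold mC
  rw [e]
  refine this.trans (Filter.eventually_congr (.of_forall fun n => ?_))
  have e2 : (![f n, f' n] : Fin 2 → M) = fun i => (![f, f'] : Fin 2 → ℕ → M) i n := by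
    funext i; fin_cases i <;> rfl
  rw [e2]

theorem up_P (f f' k : ℕ → M) : mP (upMk f) (upMk f') (upMk k) ↔
    ∀ᶠ n in ((Filter.hyperfilter ℕ : Ultrafilter ℕ) : Filter ℕ), mP (f n) (f' n) (k n) := by
  have := @relMap_quotient_mk' atomLang _ _
    (Ultraproduct.setoidPrestructure (fun _ : ℕ => M) (Filter.hyperfilter ℕ)) _
      (AtomRel.P : atomLang.Relations 3) ![f, f', k]
  have e : (![upMk f, upMk f', upMk k] : Fin 3 → UP M) =
      fun i => upMk ((![f, f', k] : Fin 3 → ℕ → M) i) := by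
    funext i; fin_cases i <;> rfl
  unfold mP
  rw [e]
  refine this.trans (Filter.eventually_congr (.of_forall fun n => ?_))
  have e2 : (![f n, f' n, k n] : Fin 3 → M) = fun i => (![f, f', k] : Fin 3 → ℕ → M) i n := by
    funext i; fin_cases i <;> rfl
  rw [e2]

theorem IsModel.ultra (h : IsModel M V r s t g) :
    IsModel (UP M) (UG V) (Filter.Germ.LiftRel r) (upMap s) (upMap t) (upG g) where
  rrefl x := by
    induction x using Filter.Germ.inductionOn with | _ x
    exact Filter.Germ.liftRel_coe.2 (.of_forall fun n => h.rrefl _)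
  rsymm x y := by
    induction x using Filter.Germ.inductionOn with | _ x
    induction y using Filter.Germ.inductionOn with | _ y
    simp only [Filter.Germ.liftRel_coe]
    exact fun k => k.mono fun n => h.rsymm _ _
  rtrans x y z := by
    induction x using Filter.Germ.inductionOn with | _ x
    induction y using Filter.Germ.inductionOn with | _ y
    induction z using Filter.Germ.inductionOn with | _ z
    simp only [Filter.Germ.liftRel_coe]
    exact fun k l => (k.and l).mono fun n hn => h.rtrans _ _ _ hn.1 hn.2
  inj a b := by
    induction a using up_ind with | _ a
    induction b using up_ind with | _ b
    simp only [upMap_mk, Filter.Germ.coe_eq]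
    intro h1 h2 h3
    apply Quotient.sound
    change ∀ᶠ n in _, a n = b n
    filter_upwards [h1, h2, upG_spec g a, upG_spec g b] with n k1 k2 k3 k4
    exact h.inj _ _ k1 k2 (by rw [k3, k4, h3])
  ex x y i := by
    induction x using Filter.Germ.inductionOn with | _ x
    induction y using Filter.Germ.inductionOn with | _ y
    rw [Filter.Germ.liftRel_coe]
    intro hr
    have : ∀ n, ∃ a, r (x n) (y n) → s a = x n ∧ t a = y n ∧ g a = i := by
      intro n
      by_cases k : r (x n) (y n)
      · obtain ⟨a, ha⟩ := h.ex _ _ i k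
        exact ⟨a, fun _ => ha⟩
      · obtain ⟨a, ha⟩ := h.ex0 (x n) (y n)
        exact ⟨a, fun k' => absurd k' k⟩
    choose a ha using this
    refine ⟨upMk a, ?_, ?_, ?_⟩
    · rw [upMap_mk, Filter.Germ.coe_eq]
      exact hr.mono fun n hn => (ha n hn).1
    · rw [upMap_mk, Filter.Germ.coe_eq]
      exact hr.mono fun n hn => (ha n hn).2.1
    · obtain ⟨n, hn, hn2⟩ := (hr.and (upG_spec g a)).exists
      rw [← hn2, (ha n hn).2.2]
  ex0 x y := by
    induction x using Filter.Germ.inductionOn with | _ x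
    induction y using Filter.Germ.inductionOn with | _ y
    choose a ha using fun n => h.ex0 (x n) (y n)
    refine ⟨upMk a, ?_, ?_⟩
    · rw [upMap_mk, Filter.Germ.coe_eq]
      exact .of_forall fun n => (ha n).1
    · rw [upMap_mk, Filter.Germ.coe_eq]
      exact .of_forall fun n => (ha n).2
  g0 a := by
    induction a using up_ind with | _ a
    simp only [upMap_mk, Filter.Germ.liftRel_coe]
    rw [← Ultrafilter.eventually_not]
    intro hr
    obtain ⟨n, hn, hn2⟩ := (hr.and (upG_spec g a)).exists
    rw [← hn2, h.g0 _ hn]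
  hI a := by
    induction a using up_ind with | _ a
    simp only [upMap_mk, Filter.Germ.coe_eq, up_I, h.hI]
    rw [Filter.eventually_and]
    refine and_congr Iff.rfl ⟨fun k => ?_, fun k => ?_⟩
    · obtain ⟨n, hn, hn2⟩ := (k.and (upG_spec g a)).exists
      rw [← hn2, hn]
    · exact (upG_spec g a).mono fun n hn => by rw [hn, k]
  hC a b := by
    induction a using up_ind with | _ a
    induction b using up_ind with | _ b
    simp only [upMap_mk, Filter.Germ.coe_eq, up_C, h.hC]
    rw [Filter.eventually_and, Filter.eventually_and]
    refine and_congr Iff.rfl (and_congr Iff.rfl ⟨fun k => ?_, fun k => ?_⟩)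
    · obtain ⟨n, hn, hn2, hn3⟩ := (k.and ((upG_spec g a).and (upG_spec g b))).exists
      rw [← hn2, ← hn3, hn]
    · exact ((upG_spec g a).and (upG_spec g b)).mono fun n hn => by rw [hn.1, hn.2, k]
  hP a b c := by
    induction a using up_ind with | _ a
    induction b using up_ind with | _ b
    induction c using up_ind with | _ c
    simp only [upMap_mk, Filter.Germ.coe_eq, Filter.Germ.liftRel_coe, up_P, h.hP]
    rw [Filter.eventually_and, Filter.eventually_and, Filter.eventually_and,
      Ultrafilter.eventually_imp, Ultrafilter.eventually_imp]
    refine and_congr Iff.rfl (and_congr Iff.rfl (and_congr Iff.rfl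
      (imp_congr Iff.rfl (imp_congr Iff.rfl ⟨fun k => ?_, fun k => ?_⟩))))
    · obtain ⟨n, hn, hn2, hn3, hn4⟩ :=
        (k.and ((upG_spec g a).and ((upG_spec g b).and (upG_spec g c)))).exists
      rw [← hn2, ← hn3, ← hn4, hn]
    · exact ((upG_spec g a).and ((upG_spec g b).and (upG_spec g c))).mono
        fun n hn => by rw [hn.1, hn.2.1, hn.2.2, k]

theorem up_equiv [Nonempty M] : atomLang.ElementarilyEquivalent M (UP M) := by
  rw [elementarilyEquivalent_iff]
  intro φ
  rw [Ultraproduct.sentence_realize]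
  simp

end Ultra

/-- Points: classes of every positive finite size. -/
abbrev V0 : Type := Σ n : ℕ, Fin (n + 1)

/-- Same class. -/
def r0 (x y : V0) : Prop := x.1 = y.1

/-- The atoms. -/
def M0 : Type := {a : V0 × V0 × Bool // ¬ r0 a.1 a.2.1 → a.2.2 = false}

/-- source -/
def s0 (a : M0) : V0 := a.1.1
/-- target -/
def t0 (a : M0) : V0 := a.1.2.1
/-- sign -/
def g0 (a : M0) : Bool := a.1.2.2

instance m0Structure : atomLang.Structure M0 where
  funMap := fun {_} f _ => f.elim
  RelMap := fun {_} R v =>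
    match R with
    | .I => s0 (v 0) = t0 (v 0) ∧ g0 (v 0) = false
    | .C => s0 (v 1) = t0 (v 0) ∧ t0 (v 1) = s0 (v 0) ∧ g0 (v 1) = g0 (v 0)
    | .P => t0 (v 0) = s0 (v 1) ∧ s0 (v 2) = s0 (v 0) ∧ t0 (v 2) = t0 (v 1) ∧
      (r0 (s0 (v 0)) (t0 (v 0)) → r0 (s0 (v 1)) (t0 (v 1)) →
        g0 (v 2) = xor (g0 (v 0)) (g0 (v 1)))

theorem m0_isModel : IsModel M0 V0 r0 s0 t0 g0 where
  rrefl _ := rfl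
  rsymm _ _ h := Eq.symm h
  rtrans _ _ _ h h' := Eq.trans h h'
  inj a b h1 h2 h3 := Subtype.ext (Prod.ext h1 (Prod.ext h2 h3))
  ex x y i h := ⟨⟨(x, y, i), fun k => absurd h k⟩, rfl, rfl, rfl⟩
  ex0 x y := ⟨⟨(x, y, false), fun _ => rfl⟩, rfl, rfl⟩
  g0 a h := a.2 h
  hI _ := Iff.rfl
  hC _ _ := Iff.rfl
  hP _ _ _ := Iff.rfl

theorem m0_finite (x : V0) : {y | r0 x y}.Finite := by
  refine (Set.finite_range (fun i : Fin (x.1 + 1) => (⟨x.1, i⟩ : V0))).subset ?_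
  rintro ⟨n, i⟩ h
  obtain rfl : x.1 = n := h
  exact ⟨i, rfl⟩

theorem m0_infinite : ∃ x : UG V0, {y | Filter.Germ.LiftRel r0 x y}.Infinite := by
  let w : ℕ → ℕ → V0 := fun k n => ⟨n, Fin.ofNat (n + 1) k⟩
  refine ⟨(w 0 : UG V0), ?_⟩
  refine Set.infinite_of_injective_forall_mem (f := fun k => (w k : UG V0)) ?_ ?_
  · intro k l hkl
    have hkl : ∀ᶠ n in ((Filter.hyperfilter ℕ : Ultrafilter ℕ) : Filter ℕ), w k n = w l n :=
      Filter.Germ.coe_eq.1 hkl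
    have hge : ∀ᶠ n in ((Filter.hyperfilter ℕ : Ultrafilter ℕ) : Filter ℕ), max k l ≤ n := by
      exact (Filter.eventually_ge_atTop _).filter_mono Nat.hyperfilter_le_atTop
    obtain ⟨n, h1, h2⟩ := (hkl.and hge).exists
    have h3 : (Fin.ofNat (n + 1) k) = Fin.ofNat (n + 1) l := by
      simpa [w] using h1
    have h4 := congrArg Fin.val h3
    simp only [Fin.val_ofNat] at h4
    rwa [Nat.mod_eq_of_lt (by omega), Nat.mod_eq_of_lt (by omega)] at h4
  · intro k
    exact Filter.Germ.liftRel_coe.2 (.of_forall fun n => rfl)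


/-- There exist two first-order structures `S` and `S'` in the language with
one ternary relation symbol `P`, one binary relation symbol `C` and one unary
relation symbol `I` such that `S` and `S'` are elementarily equivalent, both
are completely representable, but their term algebras (as structures in the
language with `+`, `;`, `−`, `⁻` and `1'`) are not elementarily equivalent. -/
theorem stmt_0 :
    ∃ (S S' : Type) (iS : atomLang.Structure S) (iS' : atomLang.Structure S'),
      (@FirstOrder.Language.ElementarilyEquivalent atomLang S S' iS iS') ∧
      (@CompRep S iS) ∧ (@CompRep S' iS') ∧
      ¬ (@FirstOrder.Language.ElementarilyEquivalent algLang
          (TermAlg S) (TermAlg S')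
          (@termAlgStructure S iS) (@termAlgStructure S' iS')) := by
  have : Nonempty M0 := ⟨⟨(⟨0, 0⟩, ⟨0, 0⟩, false), fun _ => rfl⟩⟩
  refine ⟨M0, UP M0, inferInstance, inferInstance, up_equiv, m0_isModel.compRep,
    m0_isModel.ultra.compRep, fun h => ?_⟩
  rw [elementarilyEquivalent_iff] at h
  obtain ⟨x, hx⟩ := m0_infinite
  exact m0_isModel.ultra.not_q_of_infinite x hx
    (r_Q.1 ((h fQ).1 (r_Q.2 (m0_isModel.q_of_finite m0_finite))))
end

section
/- Let k ≥ 1. For all distinct u, v ∈ ℕ and for every choice of X ∈ {R_k, T_k} and Y ∈ {R_k, T_k}, there exists w ∈ ℕ with (u,w) ∈ X and (v,w) ∈ Y. -/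
/-- For `k ≥ 1`, the relation `R_k ⊆ ℕ × ℕ`: `(u,v) ∈ R_k` iff
`v = 2^u·3^j` or `v = 2^j·3^u` for some `j`, or `u = 2^v·3^j` or `u = 2^j·3^v`
for some `j`, or `u = 2^v·5^k`. -/
def Rk (k : ℕ) : Set (ℕ × ℕ) :=
  {p | (∃ j : ℕ, p.2 = 2 ^ p.1 * 3 ^ j ∨ p.2 = 2 ^ j * 3 ^ p.1) ∨
       (∃ j : ℕ, p.1 = 2 ^ p.2 * 3 ^ j ∨ p.1 = 2 ^ j * 3 ^ p.2) ∨
       p.1 = 2 ^ p.2 * 5 ^ k}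

/-- `T_k = (ℕ × ℕ) ∖ R_k`. -/
def Tk (k : ℕ) : Set (ℕ × ℕ) := (Rk k)ᶜ

theorem aux_big (k v w : ℕ) (h : v ≤ w)
    (h1 : ∀ j : ℕ, w ≠ 2 ^ v * 3 ^ j) (h2 : ∀ j : ℕ, w ≠ 2 ^ j * 3 ^ v) : (v, w) ∉ Rk k := by
  have a : w < 2 ^ w := Nat.lt_two_pow_self
  have b : w < 3 ^ w := Nat.lt_pow_self (by norm_num)
  rintro (⟨j, e | e⟩ | ⟨j, e | e⟩ | e)
  · exact h1 j e
  · exact h2 j e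
  · have := Nat.le_mul_of_pos_right (2 ^ w) (show 0 < 3 ^ j by positivity)
    simp only at e; omega
  · have := Nat.le_mul_of_pos_left (3 ^ w) (show 0 < 2 ^ j by positivity)
    simp only at e; omega
  · have := Nat.le_mul_of_pos_right (2 ^ w) (show 0 < 5 ^ k by positivity)
    simp only at e; omega

theorem aux_inj (a b c d : ℕ) (h : 2 ^ a * 3 ^ b = 2 ^ c * 3 ^ d) : a = c ∧ b = d := by
  have key : ∀ x y : ℕ, (2 ^ x * 3 ^ y).factorization 2 = x ∧
      (2 ^ x * 3 ^ y).factorization 3 = y := by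
    intro x y
    rw [Nat.factorization_mul (by positivity) (by positivity), Nat.Prime.factorization_pow
      Nat.prime_two, Nat.Prime.factorization_pow Nat.prime_three]
    simp
  have h1 := key a b
  rw [h] at h1
  have h2 := key c d
  omega

theorem aux_RT (k u v : ℕ) (huv : u ≠ v) : ∃ w : ℕ, (u, w) ∈ Rk k ∧ (v, w) ∈ Tk k := by
  refine ⟨2 ^ u * 3 ^ (v + 1), Or.inl ⟨v + 1, Or.inl rfl⟩, aux_big k v _ ?_ ?_ ?_⟩
  · have b : v + 1 < 3 ^ (v + 1) := Nat.lt_pow_self (by norm_num)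
    have := Nat.le_mul_of_pos_left (3 ^ (v + 1)) (show 0 < 2 ^ u by positivity)
    omega
  · intro j e
    exact huv (aux_inj _ _ _ _ e).1
  · intro j e
    have := (aux_inj _ _ _ _ e).2
    omega

theorem aux_five (n a b : ℕ) : 5 * n ≠ 2 ^ a * 3 ^ b := by
  intro e
  have p : Nat.Prime 5 := by norm_num
  have h : 5 ∣ 2 ^ a * 3 ^ b := ⟨n, e.symm⟩
  rcases p.dvd_mul.1 h with h | h
  · have := p.dvd_of_dvd_pow h
    omega
  · have := p.dvd_of_dvd_pow h
    omega

/-- For `k ≥ 1`, all distinct `u, v ∈ ℕ` and every choice of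
`X, Y ∈ {R_k, T_k}`, there is `w` with `(u,w) ∈ X` and `(v,w) ∈ Y`. -/
theorem stmt_7 (k : ℕ) (hk : 1 ≤ k) (u v : ℕ) (huv : u ≠ v)
    (X Y : Set (ℕ × ℕ)) (hX : X = Rk k ∨ X = Tk k) (hY : Y = Rk k ∨ Y = Tk k) :
    ∃ w : ℕ, (u, w) ∈ X ∧ (v, w) ∈ Y := by
  rcases hX with rfl | rfl <;> rcases hY with rfl | rfl
  · exact ⟨2 ^ u * 3 ^ v, Or.inl ⟨v, Or.inl rfl⟩, Or.inl ⟨u, Or.inr rfl⟩⟩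
  · exact aux_RT k u v huv
  · obtain ⟨w, h1, h2⟩ := aux_RT k v u huv.symm
    exact ⟨w, h2, h1⟩
  · exact ⟨5 * (u + v), aux_big k u _ (by omega) (fun j => aux_five _ _ _) (fun j => aux_five _ _ _),
      aux_big k v _ (by omega) (fun j => aux_five _ _ _) (fun j => aux_five _ _ _)⟩
end

section
/- Let k ≥ 1. For every v ∈ ℕ and every X ∈ {R_k, T_k}, there exist at least two distinct u ∈ ℕ with (u,v) ∈ X. -/
theorem aux_seven (a b : ℕ) (c d p : ℕ) (hc : ¬ 7 ∣ c) (hd : ¬ 7 ∣ d)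
    (hp : p = c ^ a * d ^ b) : ¬ 7 ∣ p := by
  have h7 : Nat.Prime 7 := by norm_num
  rw [hp, h7.dvd_mul]
  rintro (h | h)
  · exact hc (h7.dvd_of_dvd_pow h)
  · exact hd (h7.dvd_of_dvd_pow h)

theorem aux_notMem (k u v : ℕ) (h7 : 7 ∣ u) (huv : v < u) : (u, v) ∉ Rk k := by
  rintro (⟨j, h | h⟩ | ⟨j, h | h⟩ | h) <;> dsimp only at h
  · have h1 : u < 2 ^ u := Nat.lt_two_pow_self
    have h2 : 2 ^ u * 1 ≤ 2 ^ u * 3 ^ j := Nat.mul_le_mul_left _ (Nat.one_le_pow _ _ (by norm_num))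
    omega
  · have h1 : u < 3 ^ u := Nat.lt_pow_self (by norm_num)
    have h2 : 1 * 3 ^ u ≤ 2 ^ j * 3 ^ u := Nat.mul_le_mul_right _ (Nat.one_le_pow _ _ (by norm_num))
    omega
  · exact aux_seven _ _ _ _ _ (by norm_num) (by norm_num) h h7
  · exact aux_seven _ _ _ _ _ (by norm_num) (by norm_num) h h7
  · exact aux_seven _ _ _ _ _ (by norm_num) (by norm_num) h h7

/-- For `k ≥ 1`, every `v ∈ ℕ` and every `X ∈ {R_k, T_k}`, there are at least
two distinct `u` with `(u,v) ∈ X`. -/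
theorem stmt_11 (k : ℕ) (hk : 1 ≤ k) (v : ℕ)
    (X : Set (ℕ × ℕ)) (hX : X = Rk k ∨ X = Tk k) :
    ∃ u u' : ℕ, u ≠ u' ∧ (u, v) ∈ X ∧ (u', v) ∈ X := by
  rcases hX with rfl | rfl
  · refine ⟨2 ^ v * 3 ^ (v + 1), 2 ^ v * 3 ^ (v + 2), ?_, ?_, ?_⟩
    · intro h
      have h1 := Nat.eq_of_mul_eq_mul_left (by positivity) h
      have h2 := Nat.pow_right_injective (le_refl 2 |>.trans (by norm_num : 2 ≤ 3)) h1
      omega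
    · exact Or.inr (Or.inl ⟨v + 1, Or.inl rfl⟩)
    · exact Or.inr (Or.inl ⟨v + 2, Or.inl rfl⟩)
  · exact ⟨7 * (v + 1), 7 * (v + 2), by omega,
      aux_notMem k _ v (Dvd.intro _ rfl) (by omega),
      aux_notMem k _ v (Dvd.intro _ rfl) (by omega)⟩
end
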